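/- Let r ≥ 1 be an integer, C ≥ 1 real, and for each prime p let θ_p : ℕ^r → ℝ be a non-negative function satisfying: (a) for all k, k' ∈ ℕ^r that differ only in the i-th coordinate with k_i = k'_i + 1, one has |θ_p(k) − θ_p(k')| ≤ C if k_i = 1 and #supp(k) ≥ 2, and |θ_p(k) − θ_p(k')| ≤ C·p^{−k_i} otherwise; and (b) θ_p(0,…,0) ≤ 1 + C·p^{−2}, and θ_p(k) ≤ 1 + #supp(k)·C·p^{−1} for all k ≠ (0,…,0), where supp(k) = {i : k_i ≠ 0}. Fix positive integers e₁,…,e_{r−1} and set A_p(ν) = θ_p(v_p(e₁),…,v_p(e_{r−1}),ν) for each prime p and ν ∈ ℕ. Then: (1) for all primes p and all ν ≥ 1, |A_p(ν) − A_p(ν−1)| ≤ C if ν = 1 and p | e₁⋯e_{r−1}, and |A_p(ν) − A_p(ν−1)| ≤ C·p^{−ν} otherwise; and (2) for every positive integer k, the product ∏_{p ∤ k} A_p(0) converges and satisfies ∏_{p ∤ k} A_p(0) ≤ (3rC)^{ω(e₁⋯e_{r−1})}·∏_p (1 + C·p^{−2}). -/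

import Mathlib

/-!
Put `A_p(ν) = θ_p(v_p(e₁),…,v_p(e_{r-1}),ν)`. If `p ∤ e₁⋯e_{r-1}`, then `A_p(ν) = θ_p(0,…,0,ν)`.
At such a prime the exceptional case of (a) cannot occur, since a vector whose first `r - 1`
coordinates vanish has support of size at most one, and (b) gives `A_p(0) ≤ 1 + C / p²`.
At the finitely many other primes `A_p(0) ≤ 3rC`, which accounts for the factor
`(3rC)^{ω(e₁⋯e_{r-1})}` in every finite subproduct, hence in the limit.

For the convergence, write `A_p(0) = max(1, A_p(0)) · min(1, A_p(0))`: the first factors exceed `1`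
by a summable amount, and the finite products of the second ones decrease and are nonnegative.
There is no positive lower bound for `A_p(0)`, so the limit may be `0` even if no factor vanishes;
this is still convergence in the sense of `Multipliable`.
-/

/-- The number of nonzero coordinates of `k`, i.e. `#supp(k)`. -/
def suppCard {r : ℕ} (k : Fin r → ℕ) : ℕ := (Finset.univ.filter fun i => k i ≠ 0).card

/-- The local conditions of the set `Θ₄,ᵣ(C)`: each `θ_p` is non-negative, and satisfies the
difference conditions (a) and the size conditions (b). -/
def LocCond (r : ℕ) (C : ℝ) (θ : ℕ → (Fin r → ℕ) → ℝ) : Prop :=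
  ∀ p : ℕ, p.Prime →
    (∀ k : Fin r → ℕ, 0 ≤ θ p k) ∧
    (∀ k k' : Fin r → ℕ, ∀ i : Fin r, k i = k' i + 1 → (∀ j : Fin r, j ≠ i → k j = k' j) →
      ((k i = 1 ∧ 2 ≤ suppCard k) → |θ p k - θ p k'| ≤ C) ∧
      (¬(k i = 1 ∧ 2 ≤ suppCard k) → |θ p k - θ p k'| ≤ C / (p : ℝ) ^ (k i))) ∧
    (θ p (fun _ => 0) ≤ 1 + C / (p : ℝ) ^ 2) ∧
    (∀ k : Fin r → ℕ, k ≠ (fun _ => 0) → θ p k ≤ 1 + (suppCard k : ℝ) * C / (p : ℝ))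

section InfiniteProducts

variable {ι : Type*} {f g : ι → ℝ} {M : ℝ}

theorem multipliable_of_nonneg_of_le_one (hf₀ : ∀ i, 0 ≤ f i) (hf₁ : ∀ i, f i ≤ 1) :
    Multipliable f :=
  ⟨_, tendsto_atTop_ciInf (Finset.prod_anti_set_of_le_one hf₀ hf₁)
    ⟨0, Set.forall_mem_range.mpr fun _ => Finset.prod_nonneg fun i _ => hf₀ i⟩⟩

theorem multipliable_of_nonneg_of_eventually_le_one_add {u : ι → ℝ} (hf₀ : ∀ i, 0 ≤ f i)
    (hu : Summable u) (hfu : ∀ᶠ i in Filter.cofinite, f i ≤ 1 + u i) : Multipliable f := by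
  have excess_summable : Summable fun i => max 1 (f i) - 1 := by
    refine hu.abs.of_norm_bounded_eventually (hfu.mono fun i hi => ?_)
    rw [Real.norm_of_nonneg (sub_nonneg.mpr (le_max_left _ _)), sub_le_iff_le_add']
    exact max_le (le_add_of_nonneg_right (abs_nonneg _))
      (hi.trans (add_le_add_right (le_abs_self _) _))
  have max_multipliable : Multipliable fun i => max 1 (f i) := by
    simpa using Real.multipliable_one_add_of_summable excess_summable
  have min_multipliable : Multipliable fun i => min 1 (f i) :=
    multipliable_of_nonneg_of_le_one (fun i => le_min zero_le_one (hf₀ i)) fun i => min_le_left _ _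
  simpa [max_mul_min] using max_multipliable.mul min_multipliable

theorem prod_le_pow_card_mul_prod (T s : Finset ι) (hM : 1 ≤ M) (hf₀ : ∀ i, 0 ≤ f i)
    (hfT : ∀ i ∈ T, f i ≤ M * g i) (hfg : ∀ i ∉ T, f i ≤ g i) (hg₀ : ∀ i, 0 ≤ g i) :
    ∏ i ∈ s, f i ≤ M ^ T.card * ∏ i ∈ s, g i := by
  classical
  calc ∏ i ∈ s, f i
      ≤ ∏ i ∈ s, (if i ∈ T then M else 1) * g i := by
        refine Finset.prod_le_prod (fun i _ => hf₀ i) fun i _ => ?_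
        split_ifs with hi
        · exact hfT i hi
        · simpa using hfg i hi
    _ = M ^ (s ∩ T).card * ∏ i ∈ s, g i := by
        rw [Finset.prod_mul_distrib, Finset.prod_ite_mem, Finset.prod_const]
    _ ≤ M ^ T.card * ∏ i ∈ s, g i := by
        have card_le : (s ∩ T).card ≤ T.card := Finset.card_le_card Finset.inter_subset_right
        exact mul_le_mul_of_nonneg_right (pow_le_pow_right₀ hM card_le)
          (Finset.prod_nonneg fun i _ => hg₀ i)

theorem tprod_le_pow_card_mul_tprod (T : Finset ι) (hM : 1 ≤ M) (hf₀ : ∀ i, 0 ≤ f i)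
    (hfT : ∀ i ∈ T, f i ≤ M * g i) (hfg : ∀ i ∉ T, f i ≤ g i) (hf : Multipliable f)
    (hg : Multipliable g) (hg₀ : ∀ i, 0 ≤ g i) :
    ∏' i, f i ≤ M ^ T.card * ∏' i, g i :=
  le_of_tendsto_of_tendsto' hf.hasProd (Filter.Tendsto.const_mul _ hg.hasProd) fun s =>
    prod_le_pow_card_mul_prod T s hM hf₀ hfT hfg hg₀

theorem tprod_subtype_le_pow_card_mul_tprod_subtype {s t : Set ι} (hst : s ⊆ t) (T : Finset ι)
    (hM : 1 ≤ M) (hf₀ : ∀ i ∈ s, 0 ≤ f i) (hfT : ∀ i ∈ s, i ∈ T → f i ≤ M * g i)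
    (hfg : ∀ i ∈ s, i ∉ T → f i ≤ g i) (hg₁ : ∀ i ∈ t, 1 ≤ g i)
    (hf : Multipliable fun i : s => f i) (hg : Multipliable fun i : t => g i) :
    ∏' i : s, f i ≤ M ^ T.card * ∏' i : t, g i := by
  have one_le (i : ι) : 1 ≤ t.mulIndicator g i := Set.one_le_mulIndicator hg₁ i
  rw [tprod_subtype s f, tprod_subtype t g]
  refine tprod_le_pow_card_mul_tprod T hM (fun i => ?_) (fun i hi => ?_) (fun i hi => ?_)
    (multipliable_subtype_iff_mulIndicator.mp hf) (multipliable_subtype_iff_mulIndicator.mp hg)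
    fun i => zero_le_one.trans (one_le i)
  · exact Set.le_mulIndicator_apply (hf₀ i) fun _ => zero_le_one
  · refine Set.mulIndicator_apply_le' (fun his => ?_) fun _ =>
      one_le_mul_of_one_le_of_one_le hM (one_le i)
    simpa only [Set.mulIndicator_of_mem (hst his)] using hfT i his hi
  · refine Set.mulIndicator_apply_le' (fun his => ?_) fun _ => one_le i
    simpa only [Set.mulIndicator_of_mem (hst his)] using hfg i his hi

end InfiniteProducts

theorem summable_const_div_natCast_sq (C : ℝ) : Summable fun n : ℕ => C / (n : ℝ) ^ 2 := by
  simpa only [div_eq_mul_inv] using (Real.summable_nat_pow_inv.mpr one_lt_two).mul_left C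

theorem factorization_eq_zero_of_not_dvd_prod {ι : Type*} [Fintype ι] {e : ι → ℕ} {p : ℕ}
    (h : ¬ p ∣ ∏ i, e i) : (fun i => (e i).factorization p) = 0 :=
  funext fun i => Nat.factorization_eq_zero_of_not_dvd fun hi =>
    h (hi.trans (Finset.dvd_prod_of_mem e (Finset.mem_univ i)))

theorem suppCard_le {r : ℕ} (k : Fin r → ℕ) : suppCard k ≤ r :=
  (Finset.card_filter_le _ _).trans_eq (Finset.card_fin r)

theorem snoc_zero_zero {m : ℕ} {α : Type*} [Zero α] :
    (Fin.snoc 0 0 : Fin (m + 1) → α) = 0 := by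
  ext i
  cases i using Fin.lastCases <;> simp

theorem snoc_apply_eq_of_ne_last {m : ℕ} {α : Type*} (v : Fin m → α) (a b : α) (j : Fin (m + 1))
    (hj : j ≠ Fin.last m) :
    (Fin.snoc v a : Fin (m + 1) → α) j = (Fin.snoc v b : Fin (m + 1) → α) j := by
  obtain ⟨j, rfl⟩ := Fin.exists_castSucc_eq.mpr hj
  simp only [Fin.snoc_castSucc]

theorem suppCard_snoc_zero_le_one {m : ℕ} (ν : ℕ) :
    suppCard (Fin.snoc 0 ν : Fin (m + 1) → ℕ) ≤ 1 := by
  simp only [suppCard, Finset.card_filter, Fin.sum_univ_castSucc, Fin.snoc_castSucc, Fin.snoc_last,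
    Pi.zero_apply, ne_eq, not_true_eq_false, if_false, Finset.sum_const_zero, zero_add]
  split_ifs <;> simp

/-- The one-variable local data `A_p(ν) = θ_p(v_p(e₁),…,v_p(e_{r-1}),ν)` of the paper, with
`r = m + 1`. -/
def specialization {m : ℕ} (θ : ℕ → (Fin (m + 1) → ℕ) → ℝ) (e : Fin m → ℕ)
    (p ν : ℕ) : ℝ :=
  θ p (Fin.snoc (fun i => (e i).factorization p) ν)

theorem specialization_of_not_dvd_prod {m : ℕ} (θ : ℕ → (Fin (m + 1) → ℕ) → ℝ) {e : Fin m → ℕ}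
    {p : ℕ} (hpe : ¬ p ∣ ∏ i, e i) (ν : ℕ) : specialization θ e p ν = θ p (Fin.snoc 0 ν) := by
  rw [specialization, factorization_eq_zero_of_not_dvd_prod hpe]

namespace LocCond

section Pointwise

variable {r p : ℕ} {C : ℝ} {θ : ℕ → (Fin r → ℕ) → ℝ} {k k' : Fin r → ℕ} {i : Fin r}

theorem nonneg (hθ : LocCond r C θ) (hp : p.Prime) (k : Fin r → ℕ) : 0 ≤ θ p k :=
  (hθ p hp).1 k

theorem apply_zero_le (hθ : LocCond r C θ) (hp : p.Prime) : θ p 0 ≤ 1 + C / (p : ℝ) ^ 2 :=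
  (hθ p hp).2.2.1

theorem abs_sub_le_div_pow (hθ : LocCond r C θ) (hp : p.Prime) (hi : k i = k' i + 1)
    (hne : ∀ j ≠ i, k j = k' j) (h : ¬ (k i = 1 ∧ 2 ≤ suppCard k)) :
    |θ p k - θ p k'| ≤ C / (p : ℝ) ^ k i :=
  ((hθ p hp).2.1 k k' i hi hne).2 h

theorem abs_sub_le (hθ : LocCond r C θ) (hC : 0 ≤ C) (hp : p.Prime) (hi : k i = k' i + 1)
    (hne : ∀ j ≠ i, k j = k' j) : |θ p k - θ p k'| ≤ C := by
  by_cases h : k i = 1 ∧ 2 ≤ suppCard k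
  · exact ((hθ p hp).2.1 k k' i hi hne).1 h
  · have one_le_pow : 1 ≤ (p : ℝ) ^ k i := one_le_pow₀ (mod_cast hp.one_le)
    exact (hθ.abs_sub_le_div_pow hp hi hne h).trans (div_le_self hC one_le_pow)

theorem apply_le_one_add_mul_div (hθ : LocCond r C θ) (hC : 0 ≤ C) (hr : 1 ≤ r) (hp : p.Prime)
    (k : Fin r → ℕ) : θ p k ≤ 1 + r * C / p := by
  have hp₁ : (1 : ℝ) ≤ p := mod_cast hp.one_le
  rcases eq_or_ne k 0 with rfl | hk
  · calc θ p 0 ≤ 1 + C / (p : ℝ) ^ 2 := hθ.apply_zero_le hp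
      _ ≤ 1 + r * C / p := by
        have numerators_le : C ≤ r * C := le_mul_of_one_le_left hC (mod_cast hr)
        have denominators_le : (p : ℝ) ≤ (p : ℝ) ^ 2 := le_self_pow₀ hp₁ two_ne_zero
        gcongr
  · calc θ p k ≤ 1 + suppCard k * C / p := (hθ p hp).2.2.2 k hk
      _ ≤ 1 + r * C / p := by
        gcongr
        exact suppCard_le k

end Pointwise

section Specialization

variable {m p : ℕ} {C : ℝ} {θ : ℕ → (Fin (m + 1) → ℕ) → ℝ} {e : Fin m → ℕ}

theorem abs_specialization_succ_sub_le (hθ : LocCond (m + 1) C θ) (hC : 0 ≤ C) (hp : p.Prime)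
    (e : Fin m → ℕ) (ν : ℕ) :
    |specialization θ e p (ν + 1) - specialization θ e p ν| ≤ C :=
  hθ.abs_sub_le hC hp (i := Fin.last m) (by simp) (snoc_apply_eq_of_ne_last _ _ _)

theorem abs_specialization_succ_sub_le_div_pow (hθ : LocCond (m + 1) C θ) (hp : p.Prime) {ν : ℕ}
    (h : ¬ (ν + 1 = 1 ∧ p ∣ ∏ i, e i)) :
    |specialization θ e p (ν + 1) - specialization θ e p ν| ≤ C / (p : ℝ) ^ (ν + 1) := by
  have support_le_one (hpe : ¬ p ∣ ∏ i, e i) :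
      suppCard (Fin.snoc (fun i => (e i).factorization p) (ν + 1) : Fin (m + 1) → ℕ) ≤ 1 := by
    rw [factorization_eq_zero_of_not_dvd_prod hpe]
    exact suppCard_snoc_zero_le_one _
  have bound := hθ.abs_sub_le_div_pow hp (i := Fin.last m) (by simp)
    (snoc_apply_eq_of_ne_last (fun i => (e i).factorization p) (ν + 1) ν)
  simp only [Fin.snoc_last] at bound
  refine bound fun ⟨hν, hsupp⟩ => h ⟨hν, ?_⟩
  by_contra hpe
  exact absurd (hsupp.trans (support_le_one hpe)) (by norm_num)

theorem specialization_zero_le_of_not_dvd_prod (hθ : LocCond (m + 1) C θ) (hp : p.Prime)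
    (hpe : ¬ p ∣ ∏ i, e i) : specialization θ e p 0 ≤ 1 + C / (p : ℝ) ^ 2 := by
  rw [specialization_of_not_dvd_prod θ hpe, snoc_zero_zero]
  exact hθ.apply_zero_le hp

theorem specialization_le (hθ : LocCond (m + 1) C θ) (hC : 1 ≤ C) (hp : p.Prime) (e : Fin m → ℕ)
    (ν : ℕ) : specialization θ e p ν ≤ 3 * ((m : ℝ) + 1) * C := by
  have hC₀ : 0 ≤ C := zero_le_one.trans hC
  have one_le : 1 ≤ ((m : ℝ) + 1) * C := one_le_mul_of_one_le_of_one_le (by simp) hC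
  calc specialization θ e p ν
      ≤ 1 + ((m + 1 : ℕ) : ℝ) * C / p := hθ.apply_le_one_add_mul_div hC₀ m.succ_pos hp _
    _ ≤ 1 + ((m : ℝ) + 1) * C := by
      push_cast
      gcongr
      exact div_le_self (by positivity) (mod_cast hp.one_le)
    _ ≤ 3 * ((m : ℝ) + 1) * C := by linarith

variable {s : Set ℕ}

theorem multipliable_specialization_zero (hθ : LocCond (m + 1) C θ) (he : ∏ i, e i ≠ 0)
    (hs : ∀ p ∈ s, p.Prime) : Multipliable fun p : s => specialization θ e p 0 := by
  refine multipliable_of_nonneg_of_eventually_le_one_add (fun p => hθ.nonneg (hs p p.2) _)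
    ((summable_const_div_natCast_sq C).subtype s) ?_
  have eventually_not_mem : ∀ᶠ p : s in Filter.cofinite, (p : ℕ) ∉ (∏ i, e i).primeFactors :=
    Subtype.val_injective.tendsto_cofinite.eventually
      (Finset.finite_toSet _).eventually_cofinite_notMem
  filter_upwards [eventually_not_mem] with p hpe
  have hp := hs p p.2
  exact hθ.specialization_zero_le_of_not_dvd_prod hp fun h => hpe (hp.mem_primeFactors h he)

theorem tprod_specialization_zero_le (hθ : LocCond (m + 1) C θ) (hC : 1 ≤ C)
    (he : ∏ i, e i ≠ 0) (hs : ∀ p ∈ s, p.Prime) :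
    ∏' p : s, specialization θ e p 0 ≤
      (3 * ((m : ℝ) + 1) * C) ^ (∏ i, e i).primeFactors.card *
        ∏' p : {p : ℕ // p.Prime}, (1 + C / (p : ℝ) ^ 2) := by
  have hM : 1 ≤ 3 * ((m : ℝ) + 1) * C :=
    one_le_mul_of_one_le_of_one_le (by linarith [m.cast_nonneg (α := ℝ)]) hC
  have one_le (p : ℕ) : 1 ≤ 1 + C / (p : ℝ) ^ 2 := le_add_of_nonneg_right (by positivity)
  refine tprod_subtype_le_pow_card_mul_tprod_subtype (f := fun p => specialization θ e p 0)
    (g := fun p : ℕ => 1 + C / (p : ℝ) ^ 2) (t := {p | p.Prime}) hs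
    (∏ i, e i).primeFactors hM (fun p hp => hθ.nonneg (hs p hp) _) (fun p hp _ => ?_)
    (fun p hp hpe => ?_) (fun p _ => one_le p) (hθ.multipliable_specialization_zero he hs)
    (Real.multipliable_one_add_of_summable ((summable_const_div_natCast_sq C).subtype _))
  · exact (hθ.specialization_le hC (hs p hp) e 0).trans
      (le_mul_of_one_le_right (zero_le_one.trans hM) (one_le p))
  · exact hθ.specialization_zero_le_of_not_dvd_prod (hs p hp) fun h =>
      hpe ((hs p hp).mem_primeFactors h he)

end Specialization

end LocCond

/-- Specializing a family `θ ∈ Θ₄,ᵣ(C)` (here `r = m + 1`) at `ν ↦ θ_p(v_p(e₁),…,v_p(e_{r-1}),ν)`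
produces local data `A_p` satisfying the one-variable conditions, with a convergent infinite
product over the primes not dividing `k` bounded by `(3rC)^{ω(e₁⋯e_{r-1})} ∏_p (1 + C/p²)`. -/
theorem locCond_specialize (m : ℕ) (C : ℝ) (hC : 1 ≤ C)
    (θ : ℕ → (Fin (m + 1) → ℕ) → ℝ) (hθ : LocCond (m + 1) C θ)
    (e : Fin m → ℕ) (he : ∀ i, 0 < e i) :
    (∀ p : ℕ, p.Prime → ∀ ν : ℕ, 1 ≤ ν →
      ((ν = 1 ∧ p ∣ ∏ i, e i) →
        |θ p (Fin.snoc (fun i => (e i).factorization p) ν) -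
            θ p (Fin.snoc (fun i => (e i).factorization p) (ν - 1))| ≤ C) ∧
      (¬(ν = 1 ∧ p ∣ ∏ i, e i) →
        |θ p (Fin.snoc (fun i => (e i).factorization p) ν) -
            θ p (Fin.snoc (fun i => (e i).factorization p) (ν - 1))| ≤ C / (p : ℝ) ^ ν)) ∧
    (∀ k : ℕ, 0 < k →
      Multipliable (fun p : {p : ℕ // p.Prime ∧ ¬ p ∣ k} =>
        θ p.1 (Fin.snoc (fun i => (e i).factorization p.1) 0)) ∧
      (∏' p : {p : ℕ // p.Prime ∧ ¬ p ∣ k},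
          θ p.1 (Fin.snoc (fun i => (e i).factorization p.1) 0)) ≤
        (3 * ((m : ℝ) + 1) * C) ^ (∏ i, e i).primeFactors.card *
          ∏' p : {p : ℕ // p.Prime}, (1 + C / (p.1 : ℝ) ^ 2)) := by
  have hE : ∏ i, e i ≠ 0 := Finset.prod_ne_zero_iff.mpr fun i _ => (he i).ne'
  refine ⟨fun p hp ν hν => ?_, fun k _ => ?_⟩
  · obtain ⟨ν, rfl⟩ := Nat.exists_eq_add_of_le' hν
    exact ⟨fun _ => hθ.abs_specialization_succ_sub_le (zero_le_one.trans hC) hp e ν,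
      hθ.abs_specialization_succ_sub_le_div_pow hp⟩
  · have prime_of_mem : ∀ p ∈ {p : ℕ | p.Prime ∧ ¬ p ∣ k}, p.Prime := fun _ hp => hp.1
    exact ⟨hθ.multipliable_specialization_zero hE prime_of_mem,
      hθ.tprod_specialization_zero_le hC hE prime_of_mem⟩
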